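/- Let m ≥ 3 be an integer, let X be a finite connected 2-connected graph such that the number N of maximal spanning trees of X not containing a given edge is independent of the edge, and let X̃ be the ℤ_m-homology cover of X, with d the graph metric on X̃ and d_Q the spanning-tree pseudometric on X̃. Then for every x, y ∈ X̃: d_Q(x,y) < girth(X) if and only if d(x,y) < girth(X); and if these inequalities hold, then d_Q(x,y) = d(x,y). -/

import Mathlib

open Filter
open scoped ENNReal NNReal

/-- `F` is a coarse embedding of `(X, dX)` into `(Y, dY)`: there are non-decreasing
functions `ρ₋, ρ₊` tending to infinity which control the distortion of distances. -/
def CoarseEmbeddingWith {X Y : Type*} (dX : X → X → ℝ) (dY : Y → Y → ℝ) (F : X → Y) : Prop :=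
  ∃ ρminus ρplus : ℝ → ℝ, Monotone ρminus ∧ Monotone ρplus ∧
    Tendsto ρminus atTop atTop ∧ Tendsto ρplus atTop atTop ∧
    ∀ x x' : X, ρminus (dX x x') ≤ dY (F x) (F x') ∧ dY (F x) (F x') ≤ ρplus (dX x x')

def IsPseudoMetricOn {X : Type*} (d : X → X → ℝ) : Prop :=
  (∀ x, d x x = 0) ∧ (∀ x y, d x y = d y x) ∧ ∀ x y z, d x z ≤ d x y + d y z

def IsMetricOn {X : Type*} (d : X → X → ℝ) : Prop :=
  (∀ x y, d x y = 0 ↔ x = y) ∧ (∀ x y, d x y = d y x) ∧ ∀ x y z, d x z ≤ d x y + d y z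

/-- The diameter of a space with distance function `dY`. -/
noncomputable def spaceDiam {Y : Type*} (dY : Y → Y → ℝ) : ℝ :=
  sSup (Set.range fun p : Y × Y => dY p.1 p.2)

/-- `D` is a coarse disjoint union of the spaces `(Y i, dY i)`: it restricts to `dY i` on each
component `Y i`, and the distance between two distinct components exceeds the maximum of
their diameters. -/
def IsCoarseDisjointUnionOf {ι : Type*} {Y : ι → Type*} (dY : ∀ i, Y i → Y i → ℝ)
    (D : (Σ i, Y i) → (Σ i, Y i) → ℝ) : Prop :=
  (∀ (i : ι) (x y : Y i), D ⟨i, x⟩ ⟨i, y⟩ = dY i x y) ∧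
  ∀ i j, i ≠ j → ∀ (x : Y i) (y : Y j),
    max (spaceDiam (dY i)) (spaceDiam (dY j)) < D ⟨i, x⟩ ⟨j, y⟩

namespace MultiGraph

variable {V E : Type*}

/-- The initial vertex of a step traversing the edge `s.1` forwards (`s.2 = true`) or
backwards (`s.2 = false`). -/
def stepSrc (src tgt : E → V) (s : E × Bool) : V := if s.2 then src s.1 else tgt s.1

/-- The terminal vertex of a step. -/
def stepTgt (src tgt : E → V) (s : E × Bool) : V := if s.2 then tgt s.1 else src s.1

/-- `p` is a walk from `a` to `b` in the multigraph with edge endpoint maps `src`, `tgt`. -/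
def IsWalk (src tgt : E → V) : V → V → List (E × Bool) → Prop
  | a, b, [] => a = b
  | a, b, s :: p => stepSrc src tgt s = a ∧ IsWalk src tgt (stepTgt src tgt s) b p

/-- The multigraph is connected. -/
def Connected (src tgt : E → V) : Prop := ∀ a b : V, ∃ p, IsWalk src tgt a b p

/-- The graph distance between two vertices (with junk value if there is no walk). -/
noncomputable def gdist (src tgt : E → V) (a b : V) : ℕ :=
  sInf {n | ∃ p, IsWalk src tgt a b p ∧ p.length = n}

/-- A cycle based at `a`: a nonempty closed walk repeating no edge and no vertex. -/
def IsCycle (src tgt : E → V) (a : V) (p : List (E × Bool)) : Prop :=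
  IsWalk src tgt a a p ∧ p ≠ [] ∧ (p.map Prod.fst).Nodup ∧ (p.map (stepSrc src tgt)).Nodup

/-- The girth: the length of a shortest cycle (`⊤` if there are no cycles). -/
noncomputable def girth (src tgt : E → V) : ℕ∞ :=
  sInf {n : ℕ∞ | ∃ (a : V) (p : List (E × Bool)), IsCycle src tgt a p ∧ (p.length : ℕ∞) = n}

/-- Removing any single edge leaves the graph connected. -/
def TwoConnected (src tgt : E → V) : Prop :=
  ∀ (e : E) (a b : V), ∃ p, IsWalk src tgt a b p ∧ ∀ s ∈ p, s.1 ≠ e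

/-- `T` is the edge set of a maximal spanning tree: every pair of vertices is joined by a
walk through `T`, and every cycle of the graph uses an edge outside `T`. -/
def IsSpanningTree (src tgt : E → V) (T : Set E) : Prop :=
  (∀ a b : V, ∃ p, IsWalk src tgt a b p ∧ ∀ s ∈ p, s.1 ∈ T) ∧
  ∀ (a : V) (p : List (E × Bool)), IsCycle src tgt a p → ∃ s ∈ p, s.1 ∉ T

/-- The number `N_e` of maximal spanning trees avoiding the edge `e`. -/
noncomputable def numTreesAvoiding (src tgt : E → V) (e : E) : ℕ :=
  Nat.card {T : Set E // IsSpanningTree src tgt T ∧ e ∉ T}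

open Classical in
/-- A chosen geodesic from `a` to `b` (junk value `[]` if there is no walk). -/
noncomputable def geod (src tgt : E → V) (a b : V) : List (E × Bool) :=
  if h : ∃ p, IsWalk src tgt a b p ∧ p.length = gdist src tgt a b then h.choose else []

open Classical in
/-- The number of times the walk `p` traverses the edge `e` in the positive direction. -/
noncomputable def countF (e : E) (p : List (E × Bool)) : ℕ :=
  (p.filter fun s => s.1 = e ∧ s.2 = true).length

open Classical in
/-- The number of times the walk `p` traverses the edge `e` in the negative direction. -/
noncomputable def countB (e : E) (p : List (E × Bool)) : ℕ :=
  (p.filter fun s => s.1 = e ∧ s.2 = false).length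

/-- Two walks are `m`-congruent if for every edge the signed numbers of traversals agree
modulo `m`. -/
def MCongruent (m : ℕ) (p₁ p₂ : List (E × Bool)) : Prop :=
  ∀ e : E, ((countF e p₁ : ℤ) - (countB e p₁ : ℤ)) ≡
    ((countF e p₂ : ℤ) - (countB e p₂ : ℤ)) [ZMOD (m : ℤ)]

/-- A walk has no backtrack if no step is immediately followed by the same edge reversed. -/
def NoBacktrack (p : List (E × Bool)) : Prop :=
  List.Chain' (fun s s' => ¬(s'.1 = s.1 ∧ s'.2 = !s.2)) p

section Cover

open Classical in
/-- The image in `(ℤ/m)^{E ∖ T₀}` of the generator of `π₁` corresponding to the edge `e`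
(trivial if `e` lies in the maximal spanning tree `T₀`). -/
noncomputable def coverRho (m : ℕ) (T₀ : Set E) (e : E) : {e' : E // e' ∉ T₀} → ZMod m :=
  fun f => if f.1 = e then 1 else 0

/-- Source map of the `ℤ/m`-homology cover built from the maximal spanning tree `T₀`:
the lift `(e, k)` of the edge `e` starts at `(src e, k)`. -/
def coverSrc (m : ℕ) (src : E → V) (T₀ : Set E) :
    E × ({e' : E // e' ∉ T₀} → ZMod m) → V × ({e' : E // e' ∉ T₀} → ZMod m) :=
  fun ek => (src ek.1, ek.2)

/-- Target map of the `ℤ/m`-homology cover: the lift `(e, k)` of the edge `e` ends at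
`(tgt e, k + ρ(e))`. -/
noncomputable def coverTgt (m : ℕ) (tgt : E → V) (T₀ : Set E) :
    E × ({e' : E // e' ∉ T₀} → ZMod m) → V × ({e' : E // e' ∉ T₀} → ZMod m) :=
  fun ek => (tgt ek.1, ek.2 + coverRho m T₀ ek.1)

open Classical in
/-- The number of positively oriented lifts of the edge `e` traversed by a walk in the cover. -/
noncomputable def countLiftF (m : ℕ) (T₀ : Set E) (e : E)
    (p : List ((E × ({e' : E // e' ∉ T₀} → ZMod m)) × Bool)) : ℕ :=
  (p.filter fun s => s.1.1 = e ∧ s.2 = true).length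

open Classical in
/-- The number of negatively oriented lifts of the edge `e` traversed by a walk in the cover. -/
noncomputable def countLiftB (m : ℕ) (T₀ : Set E) (e : E)
    (p : List ((E × ({e' : E // e' ∉ T₀} → ZMod m)) × Bool)) : ℕ :=
  (p.filter fun s => s.1.1 = e ∧ s.2 = false).length

/-- `φ(e, x, y)`: the smallest non-negative residue modulo `m` of the absolute difference
between the numbers of positively and negatively oriented lifts of `e` traversed by the
chosen geodesic from `x` to `y` in the `ℤ/m`-homology cover. -/
noncomputable def phi (m : ℕ) (src tgt : E → V) (T₀ : Set E) (e : E)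
    (x y : V × ({e' : E // e' ∉ T₀} → ZMod m)) : ℕ :=
  (((countLiftF m T₀ e (geod (coverSrc m src T₀) (coverTgt m tgt T₀) x y) : ℤ) -
      (countLiftB m T₀ e (geod (coverSrc m src T₀) (coverTgt m tgt T₀) x y) : ℤ)).natAbs) % m

/-- The pseudometric `d_Q` on the `ℤ/m`-homology cover:
`d_Q(x,y) = Σ_{e ∈ E} Σ_{T : e ∉ T} (1/N_e) · min{φ(e,x,y), m − φ(e,x,y)}`,
the inner sum ranging over maximal spanning trees not containing `e`. -/
noncomputable def dQ (m : ℕ) (src tgt : E → V) (T₀ : Set E)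
    (x y : V × ({e' : E // e' ∉ T₀} → ZMod m)) : ℝ :=
  ∑ᶠ (e : E), ∑ᶠ (T : Set E) (_ : IsSpanningTree src tgt T ∧ e ∉ T),
    (1 / (numTreesAvoiding src tgt e : ℝ)) *
      min (phi m src tgt T₀ e x y : ℝ) ((m : ℝ) - (phi m src tgt T₀ e x y : ℝ))

open Classical in
/-- The distance `d_T(C^T_x, C^T_y)` between the clouds of `x` and `y` in the Cayley graph
of `(ℤ/m)^{E ∖ T}` obtained by collapsing the clouds associated to the maximal spanning
tree `T`: the least number of lifts of edges outside `T` traversed by a walk from `x` to `y`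
in the cover. -/
noncomputable def cloudDist (m : ℕ) (src tgt : E → V) (T₀ : Set E) (T : Set E)
    (x y : V × ({e' : E // e' ∉ T₀} → ZMod m)) : ℕ :=
  sInf {n | ∃ p, IsWalk (coverSrc m src T₀) (coverTgt m tgt T₀) x y p ∧
    (p.filter fun s => s.1.1 ∉ T).length = n}

open Classical in
/-- The cloud `C^T_x ∈ (ℤ/m)^{E ∖ T}` containing `x`, computed from a chosen geodesic from a
fixed basepoint of the cover to `x` by counting signed traversals of lifts of edges outside
`T`. -/
noncomputable def cloud (m : ℕ) (src tgt : E → V) (T₀ : Set E) (T : Set E)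
    (x : V × ({e' : E // e' ∉ T₀} → ZMod m)) : {e : E // e ∉ T} → ZMod m :=
  if h : Nonempty (V × ({e' : E // e' ∉ T₀} → ZMod m)) then
    fun f =>
      (((countLiftF m T₀ f.1 (geod (coverSrc m src T₀) (coverTgt m tgt T₀) h.some x) : ℤ) -
        (countLiftB m T₀ f.1 (geod (coverSrc m src T₀) (coverTgt m tgt T₀) h.some x) : ℤ)
          : ℤ) : ZMod m)
  else fun _ => 0

end Cover

/-- `(pV, pE)` is a covering of multigraphs: it commutes with the endpoint maps, and steps
lift uniquely at every vertex. -/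
def IsGraphCovering {V' E' : Type*} (src tgt : E → V) (src' tgt' : E' → V')
    (pV : V' → V) (pE : E' → E) : Prop :=
  (∀ e : E', pV (src' e) = src (pE e)) ∧ (∀ e : E', pV (tgt' e) = tgt (pE e)) ∧
  ∀ (v' : V') (s : E × Bool), stepSrc src tgt s = pV v' →
    ∃! s' : E' × Bool, stepSrc src' tgt' s' = v' ∧ pE s'.1 = s.1 ∧ s'.2 = s.2

end MultiGraph

/-- The word length of `a` with respect to the symmetrization of the generating set `S`
in an additive group. -/
noncomputable def addWordLength {A : Type*} [AddGroup A] (S : Set A) (a : A) : ℕ :=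
  sInf {n | ∃ l : List A, (∀ x ∈ l, x ∈ S ∨ -x ∈ S) ∧ l.sum = a ∧ l.length = n}

open Classical in
/-- The word metric on `(ℤ/m)^r` with respect to the standard generating set
(one canonical generator for each factor). -/
noncomputable def zmodWordDist (m r : ℕ) (a b : Fin r → ZMod m) : ℕ :=
  addWordLength {g : Fin r → ZMod m | ∃ i : Fin r, g = Pi.single i 1} (b - a)

/-!
Write `|c|ₘ` for the distance from `c` to `mℤ`. Averaging over spanning trees cancels the weights,
so `d_Q(x, y)` is the sum over the edges `e` of `|n_e|ₘ`, where `n_e` is the signed number of times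
a geodesic from `x` to `y` runs over `e`. Since `|n|ₘ ≤ |n|`, this gives `d_Q ≤ d` at once.

Suppose that `d_Q(x, y)` is less than the girth. Then so is the number of edges with
`n_e ≢ 0 mod m`, so these edges contain no cycle and extend to a spanning tree `T`. The path in `T`
from `π x` to `π y` agrees with the projected geodesic mod `m` off `T`, where both counts vanish
mod `m`, hence it agrees with it mod `m` on every edge and lifts to a walk from `x` to `y`. It runs
at most once over each edge, and only over edges with `n_e ≢ 0`, so `d ≤ d_Q`.
-/

namespace MultiGraph

variable {V E : Type*} {src tgt : E → V} {a b c : V} {p q l₁ l₂ : List (E × Bool)}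
  {s t : E × Bool} {S T U : Set E}

/-! ### Walks -/

theorem isWalk_append :
    IsWalk src tgt a b (p ++ q) ↔ ∃ c, IsWalk src tgt a c p ∧ IsWalk src tgt c b q := by
  induction p generalizing a with
  | nil => simp [IsWalk]
  | cons s p ih => simp [IsWalk, ih, and_assoc]

theorem isWalk_append_cons :
    IsWalk src tgt a b (p ++ s :: q) ↔
      IsWalk src tgt a (stepSrc src tgt s) p ∧ IsWalk src tgt (stepTgt src tgt s) b q := by
  simp [isWalk_append, IsWalk]

theorem IsWalk.append (hp : IsWalk src tgt a b p) (hq : IsWalk src tgt b c q) :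
    IsWalk src tgt a c (p ++ q) :=
  isWalk_append.2 ⟨b, hp, hq⟩

theorem gdist_le_length (hp : IsWalk src tgt a b p) : gdist src tgt a b ≤ p.length :=
  Nat.sInf_le ⟨p, hp, rfl⟩

theorem geod_spec (h : ∃ p, IsWalk src tgt a b p) :
    IsWalk src tgt a b (geod src tgt a b) ∧ (geod src tgt a b).length = gdist src tgt a b := by
  obtain ⟨p, hp⟩ := h
  have hmin : ∃ p, IsWalk src tgt a b p ∧ p.length = gdist src tgt a b :=
    Nat.sInf_mem (s := {n | ∃ p, IsWalk src tgt a b p ∧ p.length = n}) ⟨p.length, p, hp, rfl⟩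
  rw [geod, dif_pos hmin]
  exact hmin.choose_spec

/-- The same edge traversed in the opposite direction. -/
def revStep (s : E × Bool) : E × Bool := (s.1, !s.2)

@[simp]
theorem stepSrc_revStep : stepSrc src tgt (revStep s) = stepTgt src tgt s := by
  rcases s with ⟨e, _ | _⟩ <;> rfl

@[simp]
theorem stepTgt_revStep : stepTgt src tgt (revStep s) = stepSrc src tgt s := by
  rcases s with ⟨e, _ | _⟩ <;> rfl

theorem eq_or_eq_revStep (h : s.1 = t.1) : t = s ∨ t = revStep s := by
  rcases s with ⟨e, _ | _⟩ <;> rcases t with ⟨e', _ | _⟩ <;> simp_all [revStep]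

/-- The walk `p` traversed backwards. -/
def revWalk (p : List (E × Bool)) : List (E × Bool) := (p.map revStep).reverse

@[simp]
theorem revWalk_cons : revWalk (s :: p) = revWalk p ++ [revStep s] := by
  simp [revWalk]

theorem IsWalk.revWalk (hp : IsWalk src tgt a b p) : IsWalk src tgt b a (revWalk p) := by
  induction p generalizing a with
  | nil => exact hp.symm
  | cons s p ih =>
    obtain ⟨rfl, hp⟩ := hp
    rw [revWalk_cons, isWalk_append_cons, stepSrc_revStep, stepTgt_revStep]
    exact ⟨ih hp, rfl⟩

theorem forall_mem_revWalk (hp : ∀ s ∈ p, s.1 ∈ S) : ∀ s ∈ revWalk p, s.1 ∈ S := by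
  intro s hs
  obtain ⟨t, ht, rfl⟩ := List.mem_map.1 (List.mem_reverse.1 hs)
  exact hp t ht

theorem exists_eq_append_of_not_nodup_map {α β : Type*} {f : α → β} {l : List α}
    (h : ¬(l.map f).Nodup) :
    ∃ l₁ x l₂ y l₃, l = l₁ ++ x :: (l₂ ++ y :: l₃) ∧ f x = f y := by
  induction l with
  | nil => simp at h
  | cons x l ih =>
    rw [List.map_cons, List.nodup_cons, not_and_or, not_not] at h
    rcases h with hmem | hnodup
    · obtain ⟨y, hy, hxy⟩ := List.mem_map.1 hmem
      obtain ⟨l₂, l₃, rfl⟩ := List.append_of_mem hy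
      exact ⟨[], x, l₂, y, l₃, rfl, hxy.symm⟩
    · obtain ⟨l₁, y, l₂, z, l₃, rfl, hyz⟩ := ih hnodup
      exact ⟨x :: l₁, y, l₂, z, l₃, rfl, hyz⟩

/-! ### Reachability within a set of edges -/

/-- The vertices `a` and `b` are joined by a walk all of whose edges lie in `S`. -/
def ReachableIn (src tgt : E → V) (S : Set E) (a b : V) : Prop :=
  ∃ p, IsWalk src tgt a b p ∧ ∀ s ∈ p, s.1 ∈ S

theorem ReachableIn.trans (hab : ReachableIn src tgt S a b) (hbc : ReachableIn src tgt S b c) :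
    ReachableIn src tgt S a c := by
  obtain ⟨p, hp, hpS⟩ := hab
  obtain ⟨q, hq, hqS⟩ := hbc
  exact ⟨p ++ q, hp.append hq, List.forall_mem_append.2 ⟨hpS, hqS⟩⟩

theorem ReachableIn.symm (h : ReachableIn src tgt S a b) : ReachableIn src tgt S b a := by
  obtain ⟨p, hp, hpS⟩ := h
  exact ⟨revWalk p, hp.revWalk, forall_mem_revWalk hpS⟩

theorem reachableIn_stepSrc_stepTgt :
    ReachableIn src tgt S (stepSrc src tgt s) (stepTgt src tgt s) ↔
      ReachableIn src tgt S (src s.1) (tgt s.1) := by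
  rcases s with ⟨e, _ | _⟩
  · exact ⟨ReachableIn.symm, ReachableIn.symm⟩
  · exact Iff.rfl

theorem ReachableIn.of_forall_mem (hST : ∀ e ∈ S, ReachableIn src tgt T (src e) (tgt e))
    (h : ReachableIn src tgt S a b) : ReachableIn src tgt T a b := by
  obtain ⟨p, hp, hpS⟩ := h
  induction p generalizing a with
  | nil => exact ⟨[], hp, List.forall_mem_nil _⟩
  | cons s p ih =>
    obtain ⟨rfl, hp⟩ := hp
    rw [List.forall_mem_cons] at hpS
    exact (reachableIn_stepSrc_stepTgt.2 (hST s.1 hpS.1)).trans (ih hp hpS.2)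

theorem ReachableIn.exists_nodup_edges (h : ReachableIn src tgt S a b) :
    ∃ p, IsWalk src tgt a b p ∧ (∀ s ∈ p, s.1 ∈ S) ∧ (p.map Prod.fst).Nodup := by
  obtain ⟨p, ⟨hp, hpS⟩, hmin⟩ := exists_minimalFor_of_wellFoundedLT _ List.length h
  refine ⟨p, hp, hpS, ?_⟩
  by_contra hdup
  obtain ⟨l₁, s, l₂, t, l₃, rfl, hst⟩ := exists_eq_append_of_not_nodup_map hdup
  rw [isWalk_append_cons, isWalk_append_cons] at hp
  obtain ⟨h₁, -, h₃⟩ := hp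
  simp only [List.forall_mem_append, List.forall_mem_cons] at hpS
  obtain ⟨h₁S, -, -, htS, h₃S⟩ := hpS
  have hshorter {q} (hq : IsWalk src tgt a b q ∧ ∀ s ∈ q, s.1 ∈ S) :
      ¬q.length < (l₁ ++ s :: (l₂ ++ t :: l₃)).length := fun hlt => (hmin hq hlt.le).not_gt hlt
  rcases eq_or_eq_revStep hst with rfl | rfl
  · refine hshorter ⟨isWalk_append_cons.2 ⟨h₁, h₃⟩, List.forall_mem_append.2
      ⟨h₁S, List.forall_mem_cons.2 ⟨htS, h₃S⟩⟩⟩ ?_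
    simp only [List.length_append, List.length_cons]
    omega
  · rw [stepTgt_revStep] at h₃
    refine hshorter ⟨h₁.append h₃, List.forall_mem_append.2 ⟨h₁S, h₃S⟩⟩ ?_
    simp only [List.length_append, List.length_cons]
    omega

/-! ### Signed traversal numbers -/

/-- The signed number of traversals of each edge by the walk `p`, i.e. the 1-chain of `p`. -/
noncomputable def netCount (p : List (E × Bool)) (e : E) : ℤ := (countF e p : ℤ) - countB e p

@[simp]
theorem netCount_nil : netCount ([] : List (E × Bool)) = 0 := by
  funext e
  simp [netCount, countF, countB]

theorem netCount_append : netCount (p ++ q) = netCount p + netCount q := by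
  funext e
  simp only [netCount, countF, countB, List.filter_append, List.length_append, Nat.cast_add,
    Pi.add_apply]
  ring

theorem netCount_cons : netCount (s :: p) = netCount [s] + netCount p :=
  netCount_append (p := [s])

theorem netCount_singleton [DecidableEq E] :
    netCount [s] = Pi.single s.1 (if s.2 then 1 else -1) := by
  funext e
  rcases s with ⟨f, _ | _⟩ <;> rcases eq_or_ne f e with rfl | h <;>
    simp [netCount, countF, countB, *, Ne.symm]

theorem netCount_singleton_revStep : netCount [revStep s] = -netCount [s] := by
  classical
  rcases s with ⟨e, _ | _⟩ <;> simp [netCount_singleton, revStep, ← Pi.single_neg]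

theorem netCount_revWalk : netCount (revWalk p) = -netCount p := by
  induction p with
  | nil => simp [revWalk]
  | cons s p ih =>
    rw [revWalk_cons, netCount_append, ih, netCount_singleton_revStep, netCount_cons (p := p),
      neg_add_rev]

theorem netCount_append_revStep :
    netCount (l₁ ++ s :: revStep s :: l₂) = netCount (l₁ ++ l₂) := by
  rw [netCount_append, netCount_cons, netCount_cons (p := l₂), netCount_singleton_revStep,
    add_neg_cancel_left, netCount_append]

theorem netCount_eq_zero_of_forall_mem {e : E} (hp : ∀ s ∈ p, s.1 ∈ S) (he : e ∉ S) :
    netCount p e = 0 := by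
  classical
  induction p with
  | nil => simp
  | cons s p ih =>
    rw [List.forall_mem_cons] at hp
    have hes : e ≠ s.1 := fun h => he (h ▸ hp.1)
    rw [netCount_cons, netCount_singleton, Pi.add_apply, Pi.single_eq_of_ne hes, ih hp.2, add_zero]

theorem isUnit_netCount_of_nodup (hp : (p.map Prod.fst).Nodup) (hs : s ∈ p) :
    IsUnit (netCount p s.1) := by
  classical
  induction p with
  | nil => simp at hs
  | cons t p ih =>
    rw [List.map_cons, List.nodup_cons] at hp
    have hzero : netCount p t.1 = 0 :=
      netCount_eq_zero_of_forall_mem (S := {e | e ∈ p.map Prod.fst})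
        (fun _ => List.mem_map_of_mem) hp.1
    rcases List.mem_cons.1 hs with rfl | hs
    · rw [netCount_cons, netCount_singleton, Pi.add_apply, Pi.single_eq_same, hzero, add_zero]
      split_ifs <;> simp
    · have hst : s.1 ≠ t.1 := fun h => hp.1 (h ▸ List.mem_map_of_mem hs)
      rw [netCount_cons, netCount_singleton, Pi.add_apply, Pi.single_eq_of_ne hst, zero_add]
      exact ih hp.2 hs

theorem sum_natAbs_netCount_le_length [Fintype E] :
    ∑ e, (netCount p e).natAbs ≤ p.length := by
  classical
  induction p with
  | nil => simp
  | cons s p ih =>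
    have hsingle : ∑ e, (netCount [s] e).natAbs = 1 := by
      rw [netCount_singleton, Fintype.sum_eq_single s.1 fun e he => by simp [he]]
      split_ifs <;> simp_all
    calc ∑ e, (netCount (s :: p) e).natAbs
        ≤ ∑ e, ((netCount [s] e).natAbs + (netCount p e).natAbs) := by
          rw [netCount_cons]
          exact Finset.sum_le_sum fun e _ => Int.natAbs_add_le _ _
      _ ≤ (s :: p).length := by
          rw [Finset.sum_add_distrib, hsingle, List.length_cons]
          omega

theorem IsWalk.sum_netCount_smul_sub [Fintype E] {A : Type*} [AddCommGroup A] (h : V → A)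
    (hp : IsWalk src tgt a b p) :
    ∑ e, netCount p e • (h (tgt e) - h (src e)) = h b - h a := by
  classical
  induction p generalizing a with
  | nil =>
    obtain rfl : a = b := hp
    simp
  | cons s p ih =>
    obtain ⟨rfl, hp⟩ := hp
    have hstep : ∑ e, netCount [s] e • (h (tgt e) - h (src e)) =
        h (stepTgt src tgt s) - h (stepSrc src tgt s) := by
      rw [netCount_singleton, Fintype.sum_eq_single s.1 fun e he => by simp [he]]
      rcases s with ⟨e, _ | _⟩ <;> simp [stepSrc, stepTgt]
    rw [netCount_cons]
    simp only [Pi.add_apply, add_smul, Finset.sum_add_distrib]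
    rw [hstep, ih hp, sub_add_sub_cancel']

/-! ### Forests and spanning trees -/

/-- No cycle of the graph has all its edges in `S`. -/
def IsAcyclicIn (src tgt : E → V) (S : Set E) : Prop :=
  ∀ (a : V) (p : List (E × Bool)), IsCycle src tgt a p → ∃ s ∈ p, s.1 ∉ S

theorem length_le_ncard_of_nodup [Finite E] (hp : (p.map Prod.fst).Nodup)
    (hpS : ∀ s ∈ p, s.1 ∈ S) : p.length ≤ S.ncard := by
  classical
  rw [← p.length_map (f := Prod.fst), ← List.toFinset_card_of_nodup hp, ← Set.ncard_coe_finset]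
  refine Set.ncard_le_ncard (fun e he => ?_) S.toFinite
  obtain ⟨s, hs, rfl⟩ := List.mem_map.1 (List.mem_toFinset.1 he)
  exact hpS s hs

theorem isAcyclicIn_of_ncard_lt_girth [Finite E] (hS : (S.ncard : ℕ∞) < girth src tgt) :
    IsAcyclicIn src tgt S := by
  intro a p hp
  by_contra! hpS
  have hgirth : girth src tgt ≤ p.length := sInf_le ⟨a, p, hp, rfl⟩
  have hlength : p.length ≤ S.ncard := length_le_ncard_of_nodup hp.2.2.1 hpS
  exact (hS.trans_le hgirth).not_ge (mod_cast hlength)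

theorem IsWalk.exists_eq_append_revStep (hp : IsWalk src tgt a b p)
    (hvert : (p.map (stepSrc src tgt)).Nodup) (hedge : ¬(p.map Prod.fst).Nodup) :
    ∃ l₁ s l₂, p = l₁ ++ s :: revStep s :: l₂ := by
  obtain ⟨l₁, s, l₂, t, l₃, rfl, hst⟩ := exists_eq_append_of_not_nodup_map hedge
  rcases eq_or_eq_revStep hst with rfl | rfl
  · simp [List.nodup_append] at hvert
  · cases l₂ with
    | nil => exact ⟨l₁, s, l₃, rfl⟩
    | cons u l₂ =>
      obtain ⟨-, hu, -⟩ := isWalk_append_cons.1 hp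
      simp [List.nodup_append, hu] at hvert

/- A closed walk without repeated vertices is a cycle unless it backtracks, and one with a repeated
vertex splits into two shorter closed walks. -/
theorem IsAcyclicIn.netCount_eq_zero (hS : IsAcyclicIn src tgt S) (hp : IsWalk src tgt a a p)
    (hpS : ∀ s ∈ p, s.1 ∈ S) : netCount p = 0 := by
  induction hn : p.length using Nat.strong_induction_on generalizing a p with
  | _ n ih =>
  subst hn
  by_cases hne : p = []
  · rw [hne, netCount_nil]
  by_cases hvert : (p.map (stepSrc src tgt)).Nodup
  · have hedge : ¬(p.map Prod.fst).Nodup := fun hedge =>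
      have ⟨s, hs, hsS⟩ := hS a p ⟨hp, hne, hedge, hvert⟩
      hsS (hpS s hs)
    obtain ⟨l₁, s, l₂, rfl⟩ := hp.exists_eq_append_revStep hvert hedge
    obtain ⟨h₁, -, h₂⟩ := isWalk_append_cons.1 hp
    rw [stepTgt_revStep] at h₂
    rw [netCount_append_revStep]
    simp only [List.forall_mem_append, List.forall_mem_cons] at hpS
    exact ih _ (by simp) (h₁.append h₂) (List.forall_mem_append.2 ⟨hpS.1, hpS.2.2.2⟩) rfl
  · obtain ⟨l₁, s, l₂, t, l₃, rfl, hst⟩ := exists_eq_append_of_not_nodup_map hvert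
    obtain ⟨h₁, h₂₃⟩ := isWalk_append_cons.1 hp
    obtain ⟨h₂, h₃⟩ := isWalk_append_cons.1 h₂₃
    simp only [List.forall_mem_append, List.forall_mem_cons] at hpS
    obtain ⟨h₁S, hsS, h₂S, htS, h₃S⟩ := hpS
    have hloop : netCount (s :: l₂) = 0 :=
      ih _ (by simp only [List.length_append, List.length_cons]; omega) ⟨hst, h₂⟩
        (List.forall_mem_cons.2 ⟨hsS, h₂S⟩) rfl
    have hrest : netCount (l₁ ++ t :: l₃) = 0 :=
      ih _ (by simp) (isWalk_append_cons.2 ⟨hst ▸ h₁, h₃⟩)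
        (List.forall_mem_append.2 ⟨h₁S, List.forall_mem_cons.2 ⟨htS, h₃S⟩⟩) rfl
    rw [netCount_append] at hrest
    rw [← List.cons_append, netCount_append, netCount_append, hloop, zero_add, hrest]

theorem IsAcyclicIn.netCount_eq (hS : IsAcyclicIn src tgt S)
    (hp : IsWalk src tgt a b p) (hpS : ∀ s ∈ p, s.1 ∈ S)
    (hq : IsWalk src tgt a b q) (hqS : ∀ s ∈ q, s.1 ∈ S) : netCount p = netCount q := by
  have hclosed : netCount (p ++ revWalk q) = 0 :=
    hS.netCount_eq_zero (hp.append hq.revWalk)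
      (List.forall_mem_append.2 ⟨hpS, forall_mem_revWalk hqS⟩)
  rwa [netCount_append, netCount_revWalk, add_neg_eq_zero] at hclosed

theorem IsAcyclicIn.reachableIn_of_not_insert {e : E} (hS : IsAcyclicIn src tgt S)
    (he : ¬IsAcyclicIn src tgt (insert e S)) : ReachableIn src tgt S (src e) (tgt e) := by
  unfold IsAcyclicIn at he
  push Not at he
  obtain ⟨a, p, hp, hpS⟩ := he
  obtain ⟨s, hs, hsS⟩ := hS a p hp
  obtain rfl : s.1 = e := (hpS s hs).resolve_right hsS
  obtain ⟨l₁, l₂, rfl⟩ := List.append_of_mem hs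
  obtain ⟨h₁, h₂⟩ := isWalk_append_cons.1 hp.1
  have hnodup := hp.2.2.1
  rw [List.map_append, List.map_cons, List.nodup_middle, List.nodup_cons] at hnodup
  refine reachableIn_stepSrc_stepTgt.1 (ReachableIn.symm ⟨l₂ ++ l₁, h₂.append h₁, fun t ht => ?_⟩)
  have hts : t.1 ≠ s.1 := fun h => hnodup.1 <| by
    rw [← List.map_append]
    exact List.mem_map.2 ⟨t, List.perm_append_comm.subset ht, h⟩
  exact (hpS t (by simp only [List.mem_append, List.mem_cons] at ht ⊢; tauto)).resolve_left hts

theorem IsAcyclicIn.exists_isSpanningTree [Finite E] (hS : IsAcyclicIn src tgt S) (hSU : S ⊆ U)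
    (hU : ∀ a b, ReachableIn src tgt U a b) :
    ∃ T, IsSpanningTree src tgt T ∧ S ⊆ T ∧ T ⊆ U := by
  obtain ⟨T, hST, ⟨hT, hTU⟩, hmax⟩ := Finite.exists_le_maximal
    (p := fun T => IsAcyclicIn src tgt T ∧ T ⊆ U) ⟨hS, hSU⟩
  refine ⟨T, ⟨fun a b => (hU a b).of_forall_mem fun e he => ?_, hT⟩, hST, hTU⟩
  by_cases heT : e ∈ T
  · exact ⟨[(e, true)], ⟨rfl, rfl⟩, by simpa using heT⟩
  · refine hT.reachableIn_of_not_insert fun hins => heT ?_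
    exact hmax ⟨hins, Set.insert_subset he hTU⟩ (Set.subset_insert e T) (Set.mem_insert e T)

theorem TwoConnected.exists_isSpanningTree_notMem [Finite E] (h : TwoConnected src tgt) (e : E) :
    ∃ T, IsSpanningTree src tgt T ∧ e ∉ T := by
  have hempty : IsAcyclicIn src tgt ∅ := fun a p hp =>
    have ⟨s, hs⟩ := List.exists_mem_of_ne_nil p hp.2.1
    ⟨s, hs, Set.notMem_empty _⟩
  obtain ⟨T, hT, -, hTe⟩ := hempty.exists_isSpanningTree (Set.empty_subset {e}ᶜ) (h e)
  exact ⟨T, hT, fun heT => hTe heT rfl⟩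

theorem TwoConnected.numTreesAvoiding_ne_zero [Finite E] (h : TwoConnected src tgt) (e : E) :
    numTreesAvoiding src tgt e ≠ 0 := by
  obtain ⟨T, hT⟩ := h.exists_isSpanningTree_notMem e
  have : Nonempty {T : Set E // IsSpanningTree src tgt T ∧ e ∉ T} := ⟨⟨T, hT⟩⟩
  exact Nat.card_pos.ne'

theorem mCongruent_iff {m : ℕ} :
    MCongruent m p q ↔ ∀ e, (netCount p e : ZMod m) = netCount q e :=
  forall_congr' fun _ => (ZMod.intCast_eq_intCast_iff _ _ m).symm

/- The potential `h v = netCount (path v) e`, for tree paths from `a` to `v`, jumps by `1` along `e`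
and is constant along every other edge of `T`. Summing the jumps of `h` along a walk from `a` to `b`
gives `h b - h a`, and the edges outside `T` contribute equally for `p` and `q`. -/
theorem IsSpanningTree.mCongruent [Finite E] {m : ℕ} (hT : IsSpanningTree src tgt T)
    (hp : IsWalk src tgt a b p) (hq : IsWalk src tgt a b q)
    (hpq : ∀ f ∉ T, (netCount p f : ZMod m) = netCount q f) : MCongruent m p q := by
  classical
  cases nonempty_fintype E
  refine mCongruent_iff.2 fun e => ?_
  by_cases he : e ∈ T
  swap
  · exact hpq e he
  choose path hpath hpathT using hT.1 a
  let h : V → ℤ := fun v => netCount (path v) e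
  have hjump : ∀ f ∈ T, h (tgt f) - h (src f) = (Pi.single f 1 : E → ℤ) e := by
    intro f hf
    have hpath_tgt := IsAcyclicIn.netCount_eq hT.2 (hpath (tgt f)) (hpathT (tgt f))
      (q := path (src f) ++ [(f, true)]) ((hpath (src f)).append ⟨rfl, rfl⟩)
      (List.forall_mem_append.2 ⟨hpathT (src f), by simpa using hf⟩)
    simp [h, hpath_tgt, netCount_append, netCount_singleton]
  have hsum : ∑ f, (netCount p f - netCount q f) * (h (tgt f) - h (src f)) = 0 := by
    have hpsum := hp.sum_netCount_smul_sub h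
    have hqsum := hq.sum_netCount_smul_sub h
    simp only [smul_eq_mul] at hpsum hqsum
    simp [sub_mul, hpsum, hqsum]
  have hmod : ((netCount p e - netCount q e : ℤ) : ZMod m) = 0 := by
    have hcast := congrArg (Int.cast : ℤ → ZMod m) hsum
    rw [Int.cast_sum, Fintype.sum_eq_single e] at hcast
    · simpa [hjump e he] using hcast
    · intro f hfe
      by_cases hf : f ∈ T
      · simp [hjump f hf, hfe.symm]
      · simp [hpq f hf]
  rwa [Int.cast_sub, sub_eq_zero] at hmod

/-! ### The residue norm -/

/-- The `ℓ¹`-norm of the reduction mod `m` of the 1-chain of `p`, where the norm of a residue class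
is the least absolute value of its representatives. -/
noncomputable def residueNorm [Fintype E] (m : ℕ) (p : List (E × Bool)) : ℕ :=
  ∑ e, (netCount p e : ZMod m).valMinAbs.natAbs

theorem natAbs_valMinAbs_intCast_le (m : ℕ) (n : ℤ) :
    (n : ZMod m).valMinAbs.natAbs ≤ n.natAbs := by
  rcases eq_zero_or_neZero m with rfl | _
  · exact le_rfl
  · exact ZMod.natAbs_min_of_le_div_two m _ _ (ZMod.coe_valMinAbs _) (ZMod.natAbs_valMinAbs_le _)

theorem min_natAbs_mod_eq_natAbs_valMinAbs (m : ℕ) [NeZero m] (n : ℤ) :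
    min (n.natAbs % m) (m - n.natAbs % m) = (n : ZMod m).valMinAbs.natAbs := by
  rw [← ZMod.val_natCast, ← ZMod.valMinAbs_natAbs_eq_min]
  obtain h | h := n.natAbs_eq
  · conv_rhs => rw [h, Int.cast_natCast]
  · conv_rhs => rw [h, Int.cast_neg, Int.cast_natCast, ZMod.natAbs_valMinAbs_neg]

theorem residueNorm_le_length [Fintype E] (m : ℕ) (p : List (E × Bool)) :
    residueNorm m p ≤ p.length :=
  (Finset.sum_le_sum fun _ _ => natAbs_valMinAbs_intCast_le m _).trans
    sum_natAbs_netCount_le_length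

theorem ncard_netCount_ne_zero_le_residueNorm [Fintype E] (m : ℕ) (p : List (E × Bool)) :
    {e | (netCount p e : ZMod m) ≠ 0}.ncard ≤ residueNorm m p := by
  classical
  rw [Set.ncard_eq_toFinset_card', Set.toFinset_ofPred, Finset.card_filter]
  refine Finset.sum_le_sum fun e _ => ?_
  split_ifs with h
  · rwa [Nat.one_le_iff_ne_zero, Int.natAbs_ne_zero, Ne, ZMod.valMinAbs_eq_zero]
  · exact Nat.zero_le _

theorem IsWalk.exists_mCongruent_length_le_residueNorm [Fintype E] {m : ℕ} (hm : m ≠ 1)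
    (hconn : Connected src tgt) (hp : IsWalk src tgt a b p)
    (hgirth : (residueNorm m p : ℕ∞) < girth src tgt) :
    ∃ q, IsWalk src tgt a b q ∧ MCongruent m q p ∧ q.length ≤ residueNorm m p := by
  have : Nontrivial (ZMod m) := ZMod.nontrivial_iff.2 hm
  set S : Set E := {e | (netCount p e : ZMod m) ≠ 0}
  have hncard : S.ncard ≤ residueNorm m p := ncard_netCount_ne_zero_le_residueNorm m p
  have hS : IsAcyclicIn src tgt S :=
    isAcyclicIn_of_ncard_lt_girth (lt_of_le_of_lt (mod_cast hncard) hgirth)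
  obtain ⟨T, hT, hST, -⟩ := hS.exists_isSpanningTree S.subset_univ fun a b =>
    (hconn a b).imp fun _ h => ⟨h, fun _ _ => Set.mem_univ _⟩
  obtain ⟨q, hq, hqT, hnodup⟩ := ReachableIn.exists_nodup_edges (hT.1 a b)
  have hqp : MCongruent m q p := hT.mCongruent hq hp fun f hf => by
    have hpf : (netCount p f : ZMod m) = 0 := not_not.1 fun h => hf (hST h)
    rw [hpf, netCount_eq_zero_of_forall_mem hqT hf, Int.cast_zero]
  have hqS : ∀ s ∈ q, s.1 ∈ S := fun s hs => by
    have hunit := (isUnit_netCount_of_nodup hnodup hs).map (Int.castRingHom (ZMod m))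
    rw [eq_intCast, mCongruent_iff.1 hqp] at hunit
    exact hunit.ne_zero
  exact ⟨q, hq, hqp, (length_le_ncard_of_nodup hnodup hqS).trans hncard⟩

/-! ### The homology cover -/

section Cover

variable {m : ℕ} {T₀ : Set E}

/-- The displacement of the second coordinate in the cover along any lift of the walk `p`. -/
noncomputable def monodromy (m : ℕ) (T₀ : Set E) (p : List (E × Bool)) :
    {e : E // e ∉ T₀} → ZMod m :=
  fun f => netCount p f

theorem monodromy_append : monodromy m T₀ (p ++ q) = monodromy m T₀ p + monodromy m T₀ q := by
  funext f
  simp [monodromy, netCount_append]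

theorem monodromy_eq_zero_of_forall_mem (hp : ∀ s ∈ p, s.1 ∈ T₀) : monodromy m T₀ p = 0 := by
  funext f
  simp [monodromy, netCount_eq_zero_of_forall_mem hp f.2]

theorem monodromy_singleton :
    monodromy m T₀ [s] = if s.2 then coverRho m T₀ s.1 else -coverRho m T₀ s.1 := by
  classical
  funext f
  rcases s with ⟨e, _ | _⟩ <;> by_cases h : f.1 = e <;>
    simp [monodromy, coverRho, netCount_singleton, h]

theorem MCongruent.monodromy_eq (h : MCongruent m p q) : monodromy m T₀ p = monodromy m T₀ q :=
  funext fun f => mCongruent_iff.1 h f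

/-- The projection to the base of a step in the cover. -/
def projStep (s : (E × ({e : E // e ∉ T₀} → ZMod m)) × Bool) : E × Bool := (s.1.1, s.2)

theorem IsWalk.map_projStep {x y : V × ({e : E // e ∉ T₀} → ZMod m)}
    {P : List ((E × ({e : E // e ∉ T₀} → ZMod m)) × Bool)}
    (hP : IsWalk (coverSrc m src T₀) (coverTgt m tgt T₀) x y P) :
    IsWalk src tgt x.1 y.1 (P.map projStep) ∧
      y.2 = x.2 + monodromy m T₀ (P.map projStep) := by
  induction P generalizing x with
  | nil =>
    obtain rfl : x = y := hP
    exact ⟨rfl, by simp [monodromy_eq_zero_of_forall_mem]⟩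
  | cons s P ih =>
    obtain ⟨rfl, hP⟩ := hP
    obtain ⟨hwalk, hmon⟩ := ih hP
    rw [List.map_cons, ← List.singleton_append, monodromy_append, monodromy_singleton, hmon]
    rcases s with ⟨⟨e, k⟩, _ | _⟩
    · exact ⟨⟨rfl, hwalk⟩, by simp [projStep, stepSrc, stepTgt, coverSrc, coverTgt]⟩
    · exact ⟨⟨rfl, hwalk⟩, by simp [projStep, stepSrc, stepTgt, coverSrc, coverTgt, add_assoc]⟩

theorem IsWalk.exists_lift (hp : IsWalk src tgt a b p) (k : {e : E // e ∉ T₀} → ZMod m) :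
    ∃ P, IsWalk (coverSrc m src T₀) (coverTgt m tgt T₀) (a, k) (b, k + monodromy m T₀ p) P ∧
      P.map projStep = p := by
  induction p generalizing a k with
  | nil =>
    obtain rfl : a = b := hp
    exact ⟨[], by simp [IsWalk, monodromy_eq_zero_of_forall_mem], rfl⟩
  | cons s p ih =>
    obtain ⟨rfl, hp⟩ := hp
    obtain ⟨P, hP, rfl⟩ := ih hp (k + monodromy m T₀ [s])
    rw [add_assoc, ← monodromy_append, List.singleton_append] at hP
    rcases s with ⟨e, _ | _⟩
    · refine ⟨((e, k - coverRho m T₀ e), false) :: P, ⟨?_, ?_⟩, rfl⟩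
      · simp [stepSrc, coverTgt]
      · simpa [stepTgt, coverSrc, monodromy_singleton, sub_eq_add_neg] using hP
    · refine ⟨((e, k), true) :: P, ⟨rfl, ?_⟩, rfl⟩
      simpa [stepTgt, coverTgt, monodromy_singleton] using hP

theorem exists_isWalk_monodromy_eq [Finite E] (hT₀ : ∀ a b, ReachableIn src tgt T₀ a b) (a b : V)
    (k : {e : E // e ∉ T₀} → ZMod m) : ∃ p, IsWalk src tgt a b p ∧ monodromy m T₀ p = k := by
  classical
  let loopClasses : AddSubgroup ({e : E // e ∉ T₀} → ZMod m) :=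
    { carrier := {k | ∃ p, IsWalk src tgt a a p ∧ monodromy m T₀ p = k}
      zero_mem' := ⟨[], rfl, by simp [monodromy_eq_zero_of_forall_mem]⟩
      add_mem' := by
        rintro _ _ ⟨p, hp, rfl⟩ ⟨q, hq, rfl⟩
        exact ⟨p ++ q, hp.append hq, monodromy_append⟩
      neg_mem' := by
        rintro _ ⟨p, hp, rfl⟩
        exact ⟨revWalk p, hp.revWalk, by funext f; simp [monodromy, netCount_revWalk]⟩ }
  have hgenerator (f : {e : E // e ∉ T₀}) : Pi.single f 1 ∈ loopClasses := by
    obtain ⟨p, hp, hpT⟩ := hT₀ a (src f)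
    obtain ⟨q, hq, hqT⟩ := hT₀ (tgt f) a
    refine ⟨p ++ (f.1, true) :: q, isWalk_append_cons.2 ⟨hp, hq⟩, ?_⟩
    rw [List.append_cons, monodromy_append, monodromy_append, monodromy_eq_zero_of_forall_mem hpT,
      monodromy_eq_zero_of_forall_mem hqT, zero_add, add_zero, monodromy_singleton, if_pos rfl]
    funext f'
    simp [coverRho, Pi.single_apply, Subtype.ext_iff]
  have hall (k) : k ∈ loopClasses := by
    refine AddSubgroup.pi_mem_of_single_mem k fun f => ?_
    obtain ⟨n, hn⟩ := ZMod.intCast_surjective (k f)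
    rw [← hn, ← zsmul_one n, Pi.single_zsmul]
    exact loopClasses.zsmul_mem (hgenerator f) n
  obtain ⟨p, hp, hpk⟩ := hall k
  obtain ⟨q, hq, hqT⟩ := hT₀ a b
  exact ⟨p ++ q, hp.append hq, by
    rw [monodromy_append, hpk, monodromy_eq_zero_of_forall_mem hqT, add_zero]⟩

theorem connected_cover [Finite E] (hT₀ : ∀ a b, ReachableIn src tgt T₀ a b) :
    Connected (coverSrc m src T₀) (coverTgt m tgt T₀) := by
  intro x y
  obtain ⟨p, hp, hpk⟩ := exists_isWalk_monodromy_eq hT₀ x.1 y.1 (y.2 - x.2)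
  obtain ⟨P, hP, -⟩ := hp.exists_lift x.2
  rw [hpk, add_sub_cancel] at hP
  exact ⟨P, hP⟩

theorem gdist_cover_le_length_of_mCongruent {x y : V × ({e : E // e ∉ T₀} → ZMod m)}
    {P : List ((E × ({e : E // e ∉ T₀} → ZMod m)) × Bool)}
    (hP : IsWalk (coverSrc m src T₀) (coverTgt m tgt T₀) x y P)
    (hq : IsWalk src tgt x.1 y.1 q) (hqP : MCongruent m q (P.map projStep)) :
    gdist (coverSrc m src T₀) (coverTgt m tgt T₀) x y ≤ q.length := by
  obtain ⟨Q, hQ, rfl⟩ := hq.exists_lift x.2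
  rw [hqP.monodromy_eq, ← hP.map_projStep.2] at hQ
  exact (gdist_le_length hQ).trans_eq (List.length_map _).symm

theorem netCount_map_projStep (e : E)
    (P : List ((E × ({e : E // e ∉ T₀} → ZMod m)) × Bool)) :
    netCount (P.map projStep) e = (countLiftF m T₀ e P : ℤ) - countLiftB m T₀ e P := by
  simp only [netCount, countF, countB, List.filter_map, List.length_map]
  rfl

theorem dQ_eq_residueNorm [Fintype E] [NeZero m] (h2conn : TwoConnected src tgt)
    (x y : V × ({e : E // e ∉ T₀} → ZMod m)) :
    dQ m src tgt T₀ x y =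
      residueNorm m ((geod (coverSrc m src T₀) (coverTgt m tgt T₀) x y).map projStep) := by
  classical
  rw [dQ, finsum_eq_sum_of_fintype, residueNorm, Nat.cast_sum]
  refine Finset.sum_congr rfl fun e _ => ?_
  have htrees : (numTreesAvoiding src tgt e : ℝ) ≠ 0 :=
    Nat.cast_ne_zero.2 (h2conn.numTreesAvoiding_ne_zero e)
  have hphi : phi m src tgt T₀ e x y ≤ m := (Nat.mod_lt _ (NeZero.pos m)).le
  rw [← finsum_subtype_eq_finsum_cond, finsum_eq_sum_of_fintype, Finset.sum_const,
    Finset.card_univ, ← Nat.card_eq_fintype_card, ← numTreesAvoiding, nsmul_eq_mul,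
    one_div, mul_inv_cancel_left₀ htrees, ← Nat.cast_sub hphi, ← Nat.cast_min, phi,
    ← netCount_map_projStep, min_natAbs_mod_eq_natAbs_valMinAbs]

theorem dQ_le_gdist [Finite E] [NeZero m] (h2conn : TwoConnected src tgt)
    (hT₀ : ∀ a b, ReachableIn src tgt T₀ a b) (x y : V × ({e : E // e ∉ T₀} → ZMod m)) :
    dQ m src tgt T₀ x y ≤ gdist (coverSrc m src T₀) (coverTgt m tgt T₀) x y := by
  cases nonempty_fintype E
  rw [dQ_eq_residueNorm h2conn, Nat.cast_le, ← (geod_spec (connected_cover hT₀ x y)).2]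
  exact (residueNorm_le_length m _).trans_eq (List.length_map _)

theorem gdist_le_dQ_of_lt_girth [Finite E] [NeZero m] (hm : m ≠ 1)
    (h2conn : TwoConnected src tgt) (hT₀ : ∀ a b, ReachableIn src tgt T₀ a b)
    {x y : V × ({e : E // e ∉ T₀} → ZMod m)}
    (h : ENNReal.ofReal (dQ m src tgt T₀ x y) < (girth src tgt : ℝ≥0∞)) :
    (gdist (coverSrc m src T₀) (coverTgt m tgt T₀) x y : ℝ) ≤ dQ m src tgt T₀ x y := by
  cases nonempty_fintype E
  rw [dQ_eq_residueNorm h2conn] at h ⊢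
  rw [ENNReal.ofReal_natCast, ← ENat.toENNReal_coe, ENat.toENNReal_lt] at h
  have hgeod := (geod_spec (connected_cover hT₀ x y)).1
  have hconn : Connected src tgt := fun a b => (hT₀ a b).imp fun _ => And.left
  obtain ⟨q, hq, hqP, hlength⟩ :=
    hgeod.map_projStep.1.exists_mCongruent_length_le_residueNorm hm hconn h
  exact Nat.cast_le.2 ((gdist_cover_le_length_of_mCongruent hgeod hq hqP).trans hlength)

end Cover

theorem dQ_compare_graph_metric_general {m : ℕ} (hm : 2 ≤ m) [Finite E]
    (h2conn : TwoConnected src tgt) {T₀ : Set E} (hT₀ : ∀ a b, ReachableIn src tgt T₀ a b)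
    (x y : V × ({e : E // e ∉ T₀} → ZMod m)) :
    (ENNReal.ofReal (dQ m src tgt T₀ x y) < (girth src tgt : ℝ≥0∞) ↔
      ((gdist (coverSrc m src T₀) (coverTgt m tgt T₀) x y : ℕ∞) : ℝ≥0∞) <
        (girth src tgt : ℝ≥0∞)) ∧
    (ENNReal.ofReal (dQ m src tgt T₀ x y) < (girth src tgt : ℝ≥0∞) →
      dQ m src tgt T₀ x y = (gdist (coverSrc m src T₀) (coverTgt m tgt T₀) x y : ℝ)) := by
  have : NeZero m := ⟨by omega⟩
  have hle := dQ_le_gdist h2conn hT₀ x y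
  have heq (h : ENNReal.ofReal (dQ m src tgt T₀ x y) < (girth src tgt : ℝ≥0∞)) :
      dQ m src tgt T₀ x y = gdist (coverSrc m src T₀) (coverTgt m tgt T₀) x y :=
    hle.antisymm (gdist_le_dQ_of_lt_girth (by omega) h2conn hT₀ h)
  rw [ENat.toENNReal_coe, ← ENNReal.ofReal_natCast]
  exact ⟨⟨fun h => heq h ▸ h, (ENNReal.ofReal_le_ofReal hle).trans_lt⟩, heq⟩

end MultiGraph

open MultiGraph in
/-- **Comparison of the two metrics on the `ℤ/m`-homology cover** (Proposition `Compare`):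
for `x, y` in the cover `X̃`, `d_Q(x,y) < girth X ↔ d(x,y) < girth X`, and when these
inequalities hold the two distances agree. -/
theorem dQ_compare_graph_metric (m : ℕ) (hm : 3 ≤ m) (V E : Type) [Fintype V] [Fintype E]
    (src tgt : E → V) (hconn : Connected src tgt) (h2conn : TwoConnected src tgt)
    (N : ℕ) (hN : ∀ e : E, numTreesAvoiding src tgt e = N)
    (T₀ : Set E) (hT₀ : IsSpanningTree src tgt T₀)
    (x y : V × ({e : E // e ∉ T₀} → ZMod m)) :
    (ENNReal.ofReal (dQ m src tgt T₀ x y) < (girth src tgt : ℝ≥0∞) ↔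
      ((gdist (coverSrc m src T₀) (coverTgt m tgt T₀) x y : ℕ∞) : ℝ≥0∞) <
        (girth src tgt : ℝ≥0∞)) ∧
    (ENNReal.ofReal (dQ m src tgt T₀ x y) < (girth src tgt : ℝ≥0∞) →
      dQ m src tgt T₀ x y = (gdist (coverSrc m src T₀) (coverTgt m tgt T₀) x y : ℝ)) := by
  exact dQ_compare_graph_metric_general (by omega) h2conn hT₀.1 x y
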